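/- Let X be a Banach space, (x_n) a weakly Cauchy sequence in X that is not weakly convergent, and (r_n) the Rademacher functions on [0,1]. Then the set {r_n x_n : n ∈ ℕ} is relatively weakly compact in L¹([0,1],X) but is not a δS-set. Consequently, if X is not weakly sequentially complete then X fails property (δS_λ). -/

import Mathlib

open MeasureTheory Filter Set ENNReal Pointwise

noncomputable section

def IsWeaklyCompact {X : Type*} [NormedAddCommGroup X] [NormedSpace ℝ X] (W : Set X) : Prop :=
  IsCompact (toWeakSpace ℝ X '' W)

def IsRelWeaklyCompact {X : Type*} [NormedAddCommGroup X] [NormedSpace ℝ X] (W : Set X) : Prop :=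
  IsCompact (closure (toWeakSpace ℝ X '' W))

variable {Ω : Type*} [MeasurableSpace Ω] {X : Type*} [NormedAddCommGroup X] [NormedSpace ℝ X]

/-- A set of functions in `L¹(μ,X)` is uniformly integrable if it is bounded and the integrals
of the norms over small sets are uniformly small. -/
def UnifIntegrableSet (μ : Measure Ω) (K : Set (Lp X 1 μ)) : Prop :=
  (∃ C : ℝ, ∀ f ∈ K, ‖f‖ ≤ C) ∧
  ∀ ε : ℝ, 0 < ε → ∃ δ : ℝ, 0 < δ ∧ ∀ f ∈ K, ∀ A : Set Ω, μ A ≤ ENNReal.ofReal δ →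
    ∫ ω in A, ‖(f : Ω → X) ω‖ ∂μ ≤ ε

/-- `K ⊆ L¹(μ,X)` is a δS-set if it is uniformly integrable and for every `δ > 0` there is a
weakly compact `W ⊆ X` with `μ (f ⁻¹' W) ≥ 1 - δ` for all `f ∈ K`. -/
def IsDeltaSSet (μ : Measure Ω) (K : Set (Lp X 1 μ)) : Prop :=
  UnifIntegrableSet μ K ∧
  ∀ δ : ℝ, 0 < δ → ∃ W : Set X, IsWeaklyCompact W ∧
    ∀ f ∈ K, 1 - ENNReal.ofReal δ ≤ μ ((f : Ω → X) ⁻¹' W)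

/-- A Banach space `X` has property (δSμ) if every relatively weakly compact subset of
`L¹(μ,X)` is a δS-set. -/
def DeltaSProp (μ : Measure Ω) (X : Type*) [NormedAddCommGroup X] [NormedSpace ℝ X] : Prop :=
  ∀ K : Set (Lp X 1 μ), IsRelWeaklyCompact K → IsDeltaSSet μ K

/-- The `n`-th Rademacher function `t ↦ sign (sin (2ⁿ π t))` on `[0,1]`. -/
def rademacher (n : ℕ) (t : ℝ) : ℝ := Real.sign (Real.sin (2 ^ n * Real.pi * t))

open scoped Topology

/-- A bounded sequence of continuous functions on a compact space tending pointwise to zero has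
convex combinations that are uniformly small from above. -/
lemma exists_mem_convexHull_lt_of_tendsto_zero {K : Type*} [TopologicalSpace K] [CompactSpace K]
    [T2Space K] (F : ℕ → C(K, ℝ)) (C : ℝ) (hC : ∀ n k, |F n k| ≤ C)
    (hF : ∀ k, Tendsto (fun n => F n k) atTop (𝓝 0)) {δ : ℝ} (hδ : 0 < δ) :
    ∃ f ∈ convexHull ℝ (range F), ∀ k, f k < δ := by
  by_contra! hcon
  set S : Set C(K, ℝ) := {f | ∀ k, f k < δ} with hS
  have hSo : IsOpen S := by
    have := ContinuousMap.isOpen_setOfPred_mapsTo (X := K) (Y := ℝ) isCompact_univ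
      (isOpen_Iio (a := δ))
    convert this using 1
    ext f
    simp [hS, MapsTo]
  have hSc : Convex ℝ S := by
    intro f hf g hg a b ha hb hab k
    have := convex_Iio (𝕜 := ℝ) δ (hf k) (hg k) ha hb hab
    simpa [measureUnivNNReal] using this
  have hdisj : Disjoint S (convexHull ℝ (range F)) := by
    rw [Set.disjoint_left]
    intro f hf hf'
    obtain ⟨k, hk⟩ := hcon f hf'
    exact absurd (hf k) (not_lt.2 hk)
  obtain ⟨Λ, u, hu, hu'⟩ := geometric_hahn_banach_open hSc hSo (convex_convexHull ℝ _) hdisj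
  have hu0 : 0 < u := by simpa using hu 0 (fun k => by simpa using hδ)
  have hpos : ∀ g : C(K, ℝ), 0 ≤ g → 0 ≤ Λ g := by
    intro g hg
    by_contra! hlt
    have h1 := hu ((u / Λ g) • g) (fun k => by
      have : (u / Λ g) * g k ≤ 0 :=
        mul_nonpos_of_nonpos_of_nonneg (div_nonpos_of_nonneg_of_nonpos hu0.le hlt.le) (hg k)
      simpa using this.trans_lt hδ)
    rw [map_smul, smul_eq_mul, div_mul_cancel₀ _ hlt.ne] at h1
    exact lt_irrefl _ h1
  let _ : MeasurableSpace K := borel K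
  have : BorelSpace K := ⟨rfl⟩
  let Λ₀ : CompactlySupportedContinuousMap K ℝ →ₗ[ℝ] ℝ :=
    { toFun := fun f => Λ f.toContinuousMap
      map_add' := fun f g => Λ.map_add f.toContinuousMap g.toContinuousMap
      map_smul' := fun c f => Λ.map_smul c f.toContinuousMap }
  let Λ' : CompactlySupportedContinuousMap K ℝ →ₚ[ℝ] ℝ :=
    PositiveLinearMap.mk₀ Λ₀ (fun f hf => hpos f.toContinuousMap hf)
  have hrep : ∀ f : C(K, ℝ), ∫ k, f k ∂(RealRMK.rieszMeasure Λ') = Λ f := fun f =>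
    RealRMK.integral_rieszMeasure Λ' (CompactlySupportedContinuousMap.continuousMapEquiv f)
  have hlim : Tendsto (fun n => ∫ k, F n k ∂(RealRMK.rieszMeasure Λ')) atTop
      (𝓝 (∫ _, 0 ∂(RealRMK.rieszMeasure Λ'))) :=
    tendsto_integral_of_dominated_convergence (fun _ => C)
      (fun n => (F n).continuous.aestronglyMeasurable) (integrable_const _)
      (fun n => ae_of_all _ (hC n)) (ae_of_all _ hF)
  simp only [hrep, integral_zero] at hlim
  exact absurd (ge_of_tendsto' hlim fun n => hu' _ (subset_convexHull ℝ _ ⟨n, rfl⟩)) (not_le.2 hu0)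

/-- If `zₙ` is bounded and weakly null and `hₙ ∈ L¹(μ, X)` is dominated by `zₙ` functional by
functional, no functional on `L¹(μ, X)` is bounded below by a positive number along `hₙ`. -/
lemma not_forall_le_of_dominated {X Ω : Type*} [MeasurableSpace Ω] [NormedAddCommGroup X]
    [NormedSpace ℝ X] {μ : Measure Ω} [IsProbabilityMeasure μ] (z : ℕ → X) (C : ℝ)
    (hC : ∀ n, ‖z n‖ ≤ C) (hz : ∀ φ : X →L[ℝ] ℝ, Tendsto (fun n => φ (z n)) atTop (𝓝 0))
    (h : ℕ → Lp X 1 μ) (hh : ∀ n, ∀ᵐ t ∂μ, ∀ φ : X →L[ℝ] ℝ, |φ (h n t)| ≤ |φ (z n)|)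
    (Φ : Lp X 1 μ →L[ℝ] ℝ) {ε : ℝ} (hε : 0 < ε) : ¬ ∀ n, ε ≤ Φ (h n) := by
  intro hΦ
  let B : Set (WeakDual ℝ X) := WeakDual.toStrongDual ⁻¹' Metric.closedBall 0 1
  have : CompactSpace B := isCompact_iff_compactSpace.1 (WeakDual.isCompact_closedBall 0 1)
  have hB : ∀ φ : X →L[ℝ] ℝ, ‖φ‖ ≤ 1 → ∃ b : B, ∀ y, (b : WeakDual ℝ X) y = φ y := fun φ hφ =>
    ⟨⟨StrongDual.toWeakDual φ, by simpa [B] using hφ⟩, fun y => rfl⟩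
  have hB' : ∀ b : B, ∀ y, |(b : WeakDual ℝ X) y| ≤ ‖y‖ := fun b y => by
    have hb : ‖WeakDual.toStrongDual (b : WeakDual ℝ X)‖ ≤ 1 :=
      mem_closedBall_zero_iff.1 b.2
    exact (WeakDual.toStrongDual (b : WeakDual ℝ X)).le_of_opNorm_le_of_le hb le_rfl
      |>.trans (by simp)
  let F : ℕ → C(B, ℝ) := fun n =>
    ⟨fun b => |(b : WeakDual ℝ X) (z n)|,
      ((WeakDual.eval_continuous (z n)).comp continuous_subtype_val).abs⟩
  set δ : ℝ := ε / (‖Φ‖ + 1) / 2 with hδ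
  have hδ0 : 0 < δ := by positivity
  obtain ⟨f, hf, hfδ⟩ := exists_mem_convexHull_lt_of_tendsto_zero F C
    (fun n b => by simpa [F] using (hB' b (z n)).trans (hC n))
    (fun b => by simpa [F] using (hz (WeakDual.toStrongDual (b : WeakDual ℝ X))).abs) hδ0
  let T : Set C(B, ℝ) :=
    {f | ∃ k : Lp X 1 μ, ε ≤ Φ k ∧ ∀ᵐ t ∂μ, ∀ b : B, |(b : WeakDual ℝ X) (k t)| ≤ f b}
  have hT : Convex ℝ T := by
    rintro f ⟨k, hk, hkf⟩ g ⟨l, hl, hlg⟩ a b ha hb hab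
    refine ⟨a • k + b • l, ?_, ?_⟩
    · simp only [map_add, map_smul, smul_eq_mul]
      calc ε = a * ε + b * ε := by rw [← add_mul, hab, one_mul]
        _ ≤ _ := by gcongr
    · filter_upwards [hkf, hlg, Lp.coeFn_add (a • k) (b • l), Lp.coeFn_smul a k,
        Lp.coeFn_smul b l] with t h1 h2 h3 h4 h5 φ
      have : (φ : WeakDual ℝ X) ((a • k + b • l : Lp X 1 μ) t)
          = a * (φ : WeakDual ℝ X) (k t) + b * (φ : WeakDual ℝ X) (l t) := by
        rw [h3, Pi.add_apply, h4, h5, Pi.smul_apply, Pi.smul_apply, map_add, map_smul, map_smul]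
        rfl
      rw [this]
      calc _ ≤ |a * (φ : WeakDual ℝ X) (k t)| + |b * (φ : WeakDual ℝ X) (l t)| := abs_add_le _ _
        _ = a * |(φ : WeakDual ℝ X) (k t)| + b * |(φ : WeakDual ℝ X) (l t)| := by
          rw [abs_mul, abs_mul, abs_of_nonneg ha, abs_of_nonneg hb]
        _ ≤ a * f φ + b * g φ := by gcongr; exacts [h1 φ, h2 φ]
        _ = _ := by simp
  have hFT : range F ⊆ T := by
    rintro _ ⟨n, rfl⟩
    refine ⟨h n, hΦ n, ?_⟩
    filter_upwards [hh n] with t ht b using ht (WeakDual.toStrongDual (b : WeakDual ℝ X))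
  obtain ⟨k, hk, hkf⟩ := convexHull_min hFT hT hf
  have hkn : ‖k‖ ≤ δ := by
    have := Lp.norm_le_of_ae_bound (p := 1) (f := k) (C := δ) hδ0.le (by
      filter_upwards [hkf] with t ht
      obtain ⟨φ, hφ, hφt⟩ := exists_dual_vector'' ℝ (k t)
      obtain ⟨b, hb⟩ := hB φ hφ
      have h1 := (ht b).trans (hfδ b).le
      rw [hb, hφt] at h1
      simpa using h1)
    simpa [measureUnivNNReal] using this
  have h2 : Φ k ≤ ‖Φ‖ * δ := (le_abs_self _).trans (Φ.le_of_opNorm_le_of_le le_rfl hkn)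
  have h3 : ‖Φ‖ * δ < ε := by
    have : (‖Φ‖ + 1) * (2 * δ) = ε := by rw [hδ]; field_simp
    nlinarith [norm_nonneg Φ]
  linarith

/-- A weakly Cauchy sequence is norm bounded. -/
lemma exists_norm_le_of_weaklyCauchy {X : Type*} [NormedAddCommGroup X] [NormedSpace ℝ X]
    (x : ℕ → X) (hx : ∀ φ : X →L[ℝ] ℝ, ∃ L : ℝ, Tendsto (fun n => φ (x n)) atTop (𝓝 L)) :
    ∃ C, ∀ n, ‖x n‖ ≤ C := by
  obtain ⟨C, hC⟩ := banach_steinhaus (g := fun n => NormedSpace.inclusionInDoubleDual ℝ X (x n))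
    (fun φ => by
      obtain ⟨L, hL⟩ := hx φ
      obtain ⟨M, hM⟩ := hL.norm.bddAbove_range
      exact ⟨M, fun n => hM ⟨n, rfl⟩⟩)
  exact ⟨C, fun n => by
    simpa using ((NormedSpace.inclusionInDoubleDualLi ℝ (E := X)).norm_map (x n)).symm.trans_le
      (hC n)⟩

/-- A weakly Cauchy sequence is Cauchy uniformly over all `h ∈ L¹(μ, X)` dominated by the
differences of its terms. -/
lemma exists_forall_abs_le_of_weaklyCauchy {X Ω : Type*} [MeasurableSpace Ω]
    [NormedAddCommGroup X] [NormedSpace ℝ X] {μ : Measure Ω} [IsProbabilityMeasure μ] (x : ℕ → X)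
    (hx : ∀ φ : X →L[ℝ] ℝ, ∃ L : ℝ, Tendsto (fun n => φ (x n)) atTop (𝓝 L))
    (Φ : Lp X 1 μ →L[ℝ] ℝ) {ε : ℝ} (hε : 0 < ε) :
    ∃ N, ∀ n ≥ N, ∀ h : Lp X 1 μ,
      (∀ᵐ t ∂μ, ∀ φ : X →L[ℝ] ℝ, |φ (h t)| ≤ |φ (x n - x N)|) → |Φ h| ≤ ε := by
  by_contra! hcon
  choose n hn h hh hΦ using hcon
  obtain ⟨C, hC⟩ := exists_norm_le_of_weaklyCauchy x hx
  let s : ℕ → ℝ := fun N => SignType.sign (Φ (h N))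
  refine not_forall_le_of_dominated (fun N => x (n N) - x N) (C + C)
    (fun N => (norm_sub_le _ _).trans (add_le_add (hC _) (hC _))) (fun φ => ?_)
    (fun N => s N • h N) (fun N => ?_) Φ hε (fun N => ?_)
  · obtain ⟨L, hL⟩ := hx φ
    simpa using (hL.comp (tendsto_atTop_mono hn tendsto_id)).sub hL
  · filter_upwards [hh N, Lp.coeFn_smul (s N) (h N)] with t ht hs φ
    rw [hs, Pi.smul_apply, map_smul, smul_eq_mul, abs_mul]
    refine (mul_le_of_le_one_left (abs_nonneg _) ?_).trans (ht φ)
    simp only [s]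
    cases SignType.sign (Φ (h N)) <;> simp
  · rw [map_smul, smul_eq_mul, sign_mul_self]
    exact (hΦ N).le

lemma rademacher_antiperiodic (n : ℕ) (t : ℝ) :
    rademacher n (t + (2 ^ n)⁻¹) = -rademacher n t := by
  have h : (2 : ℝ) ^ n * Real.pi * (t + (2 ^ n)⁻¹) = 2 ^ n * Real.pi * t + Real.pi := by
    field_simp
  rw [rademacher, rademacher, h, Real.sin_add_pi, Real.sign_neg]

lemma rademacher_periodic {m n : ℕ} (hmn : m < n) :
    Function.Periodic (rademacher n) (2 ^ m)⁻¹ := by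
  intro t
  obtain ⟨k, rfl⟩ := Nat.exists_eq_add_of_lt hmn
  have h : (2 : ℝ) ^ (m + k + 1) * Real.pi * (t + (2 ^ m)⁻¹)
      = 2 ^ (m + k + 1) * Real.pi * t + (2 ^ k : ℕ) * (2 * Real.pi) := by
    push_cast
    field_simp
    ring
  rw [rademacher, rademacher, h, Real.sin_add_nat_mul_two_pi]

lemma measurable_rademacher (n : ℕ) : Measurable (rademacher n) := by
  have : Measurable Real.sign := by
    unfold Real.sign
    exact Measurable.ite measurableSet_Iio measurable_const
      (Measurable.ite measurableSet_Ioi measurable_const measurable_const)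
  exact this.comp (by fun_prop)

lemma abs_rademacher_le_one (n : ℕ) (t : ℝ) : |rademacher n t| ≤ 1 := by
  rcases Real.sign_apply_eq (Real.sin (2 ^ n * Real.pi * t)) with h | h | h <;>
    simp [rademacher, h]

lemma ae_rademacher_eq (n : ℕ) : ∀ᵐ t : ℝ, rademacher n t = 1 ∨ rademacher n t = -1 := by
  have hc : (range fun k : ℤ => (k : ℝ) / 2 ^ n).Countable := countable_range _
  filter_upwards [hc.ae_notMem volume] with t ht
  have : Real.sin (2 ^ n * Real.pi * t) ≠ 0 := fun h => by
    obtain ⟨k, hk⟩ := Real.sin_eq_zero_iff.1 h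
    refine ht ⟨k, ?_⟩
    have : (k : ℝ) = 2 ^ n * t := mul_right_cancel₀ Real.pi_ne_zero (by rw [hk]; ring)
    simp [this]
  exact (Real.sign_apply_eq_of_ne_zero _ this).symm

lemma intervalIntegral_rademacher_mul {m n : ℕ} (hm : 0 < m) (hmn : m < n) :
    ∫ t in (0 : ℝ)..1, rademacher m t * rademacher n t = 0 := by
  have hper : Function.Periodic (fun t => rademacher m t * rademacher n t) 1 := fun t => by
    have h1 : Function.Periodic (rademacher m) 1 := by simpa using rademacher_periodic hm
    have h2 : Function.Periodic (rademacher n) 1 := by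
      simpa using rademacher_periodic (hm.trans hmn)
    simp only [h1 t, h2 t]
  have h1 := hper.intervalIntegral_add_eq 0 (2 ^ m)⁻¹
  have h2 := intervalIntegral.integral_comp_add_right (a := 0) (b := 1)
    (fun t => rademacher m t * rademacher n t) (2 ^ m : ℝ)⁻¹
  simp only [rademacher_antiperiodic, rademacher_periodic hmn _, neg_mul,
    intervalIntegral.integral_neg] at h2
  simp only [zero_add] at h1 h2
  rw [add_comm _ (1 : ℝ)] at h1
  linarith

lemma memLp_rademacher (n : ℕ) (p : ℝ≥0∞) :
    MemLp (rademacher n) p (volume.restrict (Icc (0 : ℝ) 1)) :=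
  MemLp.of_bound (measurable_rademacher n).aestronglyMeasurable 1
    (ae_of_all _ (abs_rademacher_le_one n))

instance : IsProbabilityMeasure (volume.restrict (Icc (0 : ℝ) 1)) := ⟨by simp⟩

lemma orthonormal_rademacher :
    Orthonormal ℝ fun n : ℕ => (memLp_rademacher (n + 1) 2).toLp := by
  have key : ∀ m n : ℕ, inner ℝ (memLp_rademacher m 2).toLp (memLp_rademacher n 2).toLp
      = ∫ t in Icc (0 : ℝ) 1, rademacher m t * rademacher n t := fun m n => by
    rw [L2.inner_def]
    refine integral_congr_ae ?_
    filter_upwards [(memLp_rademacher m 2).coeFn_toLp, (memLp_rademacher n 2).coeFn_toLp]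
      with t h1 h2
    rw [h1, h2]
    simp [mul_comm]
  have key' : ∀ m n : ℕ, 0 < m → m < n →
      inner ℝ (memLp_rademacher m 2).toLp (memLp_rademacher n 2).toLp = 0 := fun m n hm hmn => by
    rw [key, integral_Icc_eq_integral_Ioc, ← intervalIntegral.integral_of_le zero_le_one,
      intervalIntegral_rademacher_mul hm hmn]
  constructor
  · intro n
    have h1 : ∫ t in Icc (0 : ℝ) 1, rademacher (n + 1) t * rademacher (n + 1) t
        = ∫ t in Icc (0 : ℝ) 1, 1 := by
      refine integral_congr_ae ?_
      filter_upwards [ae_restrict_of_ae (ae_rademacher_eq (n + 1))] with t ht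
      rcases ht with ht | ht <;> simp [ht]
    have h2 := key (n + 1) (n + 1)
    rw [h1, real_inner_self_eq_norm_sq] at h2
    exact (pow_eq_one_iff_of_nonneg (norm_nonneg _) two_ne_zero).1 (by simpa only [integral_const,
      probReal_univ, smul_eq_mul, mul_one] using h2)
  · intro m n hmn
    rcases hmn.lt_or_gt with h | h
    · exact key' _ _ m.succ_pos (by lia)
    · rw [real_inner_comm]
      exact key' _ _ n.succ_pos (by lia)

/-- The inclusion of `L²` into `L¹` over a probability space. -/
def lpTwoToLpOne {Ω : Type*} [MeasurableSpace Ω] (μ : Measure Ω) [IsProbabilityMeasure μ] :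
    Lp ℝ 2 μ →L[ℝ] Lp ℝ 1 μ :=
  LinearMap.mkContinuous
    { toFun := fun f => ⟨f, Lp.antitone one_le_two f.2⟩
      map_add' := fun _ _ => rfl
      map_smul' := fun _ _ => rfl } 1 (fun f => by
    rw [one_mul, Lp.norm_def, Lp.norm_def]
    exact ENNReal.toReal_mono (Lp.eLpNorm_ne_top f)
      (eLpNorm_le_eLpNorm_of_exponent_le one_le_two (Lp.aestronglyMeasurable f)))

/-- The Rademacher functions are weakly null in `L¹([0,1])`. -/
lemma tendsto_apply_rademacher (ψ : Lp ℝ 1 (volume.restrict (Icc (0 : ℝ) 1)) →L[ℝ] ℝ) :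
    Tendsto (fun n => ψ (memLp_rademacher n 1).toLp) atTop (𝓝 0) := by
  rw [← tendsto_add_atTop_iff_nat 1]
  let v := (InnerProductSpace.toDual ℝ _).symm (ψ.comp (lpTwoToLpOne _))
  have h := (orthonormal_rademacher.inner_products_summable (x := v)).tendsto_atTop_zero
  have h' := h.sqrt
  simp only [Real.sqrt_zero, Real.sqrt_sq (norm_nonneg _)] at h'
  refine (tendsto_zero_iff_norm_tendsto_zero.2 h').congr fun n => ?_
  rw [real_inner_comm, InnerProductSpace.toDual_symm_apply]
  rfl

/-- If `xₙ` is weakly Cauchy then `rₙ xₙ` is weakly null in `L¹([0,1], X)`. -/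
lemma tendsto_apply_rademacher_smul {X : Type*} [NormedAddCommGroup X] [NormedSpace ℝ X]
    (x : ℕ → X) (hx : ∀ φ : X →L[ℝ] ℝ, ∃ L : ℝ, Tendsto (fun n => φ (x n)) atTop (𝓝 L))
    (g : ℕ → Lp X 1 (volume.restrict (Icc (0 : ℝ) 1)))
    (hg : ∀ n, (g n : ℝ → X) =ᵐ[volume.restrict (Icc (0 : ℝ) 1)]
      fun t => rademacher n t • x n)
    (Φ : Lp X 1 (volume.restrict (Icc (0 : ℝ) 1)) →L[ℝ] ℝ) :
    Tendsto (fun n => Φ (g n)) atTop (𝓝 0) := by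
  rw [Metric.tendsto_atTop]
  intro ε hε
  obtain ⟨N, hN⟩ := exists_forall_abs_le_of_weaklyCauchy x hx Φ (half_pos hε)
  let T : Lp ℝ 1 (volume.restrict (Icc (0 : ℝ) 1)) →L[ℝ] Lp X 1 (volume.restrict (Icc (0 : ℝ) 1)) :=
    (ContinuousLinearMap.toSpanSingleton ℝ (x N)).compLpL 1 _
  obtain ⟨M, hM⟩ := Metric.tendsto_atTop.1 (tendsto_apply_rademacher (Φ.comp T)) _ (half_pos hε)
  refine ⟨max N M, fun n hn => ?_⟩
  set r := (memLp_rademacher n 1).toLp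
  have h1 := hM n (le_of_max_le_right hn)
  have h2 : |Φ (g n - T r)| ≤ ε / 2 := by
    refine hN n (le_of_max_le_left hn) _ ?_
    filter_upwards [hg n, Lp.coeFn_sub (g n) (T r), (memLp_rademacher n 1).coeFn_toLp,
      (ContinuousLinearMap.toSpanSingleton ℝ (x N)).coeFn_compLpL r] with t ht hs hr hT φ
    have : (g n - T r : Lp X 1 _) t = rademacher n t • (x n - x N) := by
      rw [hs, Pi.sub_apply, ht, hT, hr, smul_sub]
      rfl
    rw [this, map_smul, smul_eq_mul, abs_mul]
    exact mul_le_of_le_one_left (abs_nonneg _) (abs_rademacher_le_one n t)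
  rw [Real.dist_eq, sub_zero] at h1 ⊢
  calc |Φ (g n)| = |Φ (g n - T r) + Φ (T r)| := by rw [map_sub, sub_add_cancel]
    _ ≤ |Φ (g n - T r)| + |Φ (T r)| := abs_add_le _ _
    _ < ε / 2 + ε / 2 := add_lt_add_of_le_of_lt h2 h1
    _ = ε := add_halves ε

/-- A weakly null sequence has relatively weakly compact range. -/
lemma isRelWeaklyCompact_range_of_tendsto_zero {X : Type*} [NormedAddCommGroup X]
    [NormedSpace ℝ X] (x : ℕ → X)
    (hx : ∀ φ : X →L[ℝ] ℝ, Tendsto (fun n => φ (x n)) atTop (𝓝 0)) :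
    IsRelWeaklyCompact (range x) := by
  have h : Tendsto (fun n => toWeakSpace ℝ X (x n)) atTop (𝓝 (toWeakSpace ℝ X 0)) := by
    refine (WeakBilin.tendsto_iff_forall_eval_tendsto (topDualPairing ℝ X).flip ?_).2
      fun φ => ?_
    · intro u v huv
      by_contra hne
      obtain ⟨f, hf⟩ := SeparatingDual.exists_separating_of_ne (R := ℝ) hne
      exact hf (DFunLike.congr_fun huv f)
    · have h := hx φ
      rw [← map_zero φ] at h
      exact h
  refine h.isCompact_insert_range.closure_of_subset ?_
  rintro _ ⟨_, ⟨n, rfl⟩, rfl⟩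
  exact Or.inr ⟨n, rfl⟩

/-- A weakly Cauchy sequence contained in `W ∪ -W` with `W` weakly compact converges weakly. -/
lemma exists_weak_limit_of_mem_isWeaklyCompact {X : Type*} [NormedAddCommGroup X]
    [NormedSpace ℝ X] (x : ℕ → X)
    (hx : ∀ φ : X →L[ℝ] ℝ, ∃ L : ℝ, Tendsto (fun n => φ (x n)) atTop (𝓝 L))
    {W : Set X} (hW : IsWeaklyCompact W) (hxW : ∀ n, x n ∈ W ∨ -x n ∈ W) :
    ∃ y : X, ∀ φ : X →L[ℝ] ℝ, Tendsto (fun n => φ (x n)) atTop (𝓝 (φ y)) := by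
  have hc := hW.union hW.neg
  obtain ⟨y, -, hy⟩ := hc.exists_mapClusterPt_of_frequently (l := atTop)
    (f := fun n => toWeakSpace ℝ X (x n)) (Frequently.of_forall fun n => by
      rcases hxW n with h | h
      · exact Or.inl ⟨_, h, rfl⟩
      · exact Or.inr ⟨_, h, by simp⟩)
  refine ⟨(toWeakSpace ℝ X).symm y, fun φ => ?_⟩
  obtain ⟨L, hL⟩ := hx φ
  have hφ : Continuous fun z : WeakSpace ℝ X => φ ((toWeakSpace ℝ X).symm z) :=
    WeakBilin.eval_continuous (topDualPairing ℝ X).flip φ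
  have h1 : ClusterPt (φ ((toWeakSpace ℝ X).symm y)) (map (fun n => φ (x n)) atTop) :=
    MapClusterPt.continuousAt_comp (X := WeakSpace ℝ X) hφ.continuousAt hy
  have := h1.mono hL
  rwa [eq_of_nhds_neBot this]

/-- If `(xₙ)` is weakly Cauchy but not weakly convergent in `X`, then `{rₙ xₙ : n}` is
relatively weakly compact in `L¹([0,1],X)` but not a δS-set; consequently a Banach space
which is not weakly sequentially complete fails property (δS_λ). -/
theorem rademacher_relWeaklyCompact_not_deltaS {X : Type*} [NormedAddCommGroup X]
    [NormedSpace ℝ X] [CompleteSpace X] (x : ℕ → X)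
    (hCauchy : ∀ φ : X →L[ℝ] ℝ, ∃ L : ℝ, Tendsto (fun n => φ (x n)) atTop (nhds L))
    (hnconv : ¬ ∃ y : X, ∀ φ : X →L[ℝ] ℝ, Tendsto (fun n => φ (x n)) atTop (nhds (φ y))) :
    (∀ g : ℕ → Lp X 1 (volume.restrict (Set.Icc (0 : ℝ) 1)),
      (∀ n : ℕ, (g n : ℝ → X) =ᵐ[volume.restrict (Set.Icc (0 : ℝ) 1)]
        fun t => rademacher n t • x n) →
      IsRelWeaklyCompact (Set.range g) ∧
        ¬ IsDeltaSSet (volume.restrict (Set.Icc (0 : ℝ) 1)) (Set.range g)) ∧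
    ¬ DeltaSProp (volume.restrict (Set.Icc (0 : ℝ) 1)) X := by
  have main : ∀ g : ℕ → Lp X 1 (volume.restrict (Set.Icc (0 : ℝ) 1)),
      (∀ n : ℕ, (g n : ℝ → X) =ᵐ[volume.restrict (Set.Icc (0 : ℝ) 1)]
        fun t => rademacher n t • x n) →
      IsRelWeaklyCompact (Set.range g) ∧
        ¬ IsDeltaSSet (volume.restrict (Set.Icc (0 : ℝ) 1)) (Set.range g) := by
    refine fun g hg => ⟨isRelWeaklyCompact_range_of_tendsto_zero g
      (tendsto_apply_rademacher_smul x hCauchy g hg), fun hδ => ?_⟩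
    obtain ⟨W, hW, hgW⟩ := hδ.2 (1 / 2) one_half_pos
    refine hnconv (exists_weak_limit_of_mem_isWeaklyCompact x hCauchy hW fun n => ?_)
    have hpos : volume.restrict (Set.Icc (0 : ℝ) 1) ((g n : ℝ → X) ⁻¹' W) ≠ 0 := fun h0 => by
      have h1 := hgW (g n) ⟨n, rfl⟩
      rw [h0, nonpos_iff_eq_zero, tsub_eq_zero_iff_le, ENNReal.one_le_ofReal] at h1
      norm_num at h1
    have hfreq : ∃ᵐ t ∂(volume.restrict (Set.Icc (0 : ℝ) 1)), g n t ∈ W := frequently_ae_iff.2 hpos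
    obtain ⟨t, ht, hgt, hr⟩ :=
      (hfreq.and_eventually ((hg n).and (ae_restrict_of_ae (ae_rademacher_eq n)))).exists
    rw [hgt] at ht
    rcases hr with hr | hr
    · exact Or.inl (by simpa [hr] using ht)
    · exact Or.inr (by simpa [hr] using ht)
  refine ⟨main, fun hX => ?_⟩
  have hmem : ∀ n, MemLp (fun t => rademacher n t • x n) 1 (volume.restrict (Set.Icc (0 : ℝ) 1)) :=
    fun n => (ContinuousLinearMap.toSpanSingleton ℝ (x n)).comp_memLp' (memLp_rademacher n 1)
  obtain ⟨h1, h2⟩ := main (fun n => (hmem n).toLp) fun n => (hmem n).coeFn_toLp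
  exact h2 (hX _ h1)
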